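/- Suppose the integers n ≥ m ≥ 1 satisfy m ≥ √(10·n·log n), and write u = n/m. Then e^{ξ(u)/m} < 2^{1/3}, and there exists an absolute constant C > 0 such that for every prime power q one has | G_q(x)/G_q(e^{ξ(u)/m}) − 1 | ≤ C·u·(log(u+1))² / ( m²·q^{⌈(m+1)/2⌉} ). -/

import Mathlib

open Real

noncomputable section

/-- Predicate characterizing the Dickman function `ρ : [0,∞) → (0,∞)`:
continuous on `[0,∞)`, positive, equal to `1` on `[0,1]`, and satisfying the
delay differential equation `t·ρ'(t) + ρ(t-1) = 0` for `t > 1`. -/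
def IsDickman (ρ : ℝ → ℝ) : Prop :=
  ContinuousOn ρ (Set.Ici 0) ∧
  (∀ t : ℝ, 0 ≤ t → 0 < ρ t) ∧
  (∀ t ∈ Set.Icc (0:ℝ) 1, ρ t = 1) ∧
  (∀ t : ℝ, 1 < t → HasDerivAt ρ (-(ρ (t - 1)) / t) t)

/-- `ξ(u)`: for `u > 1`, the unique positive solution of `e^ξ = 1 + u·ξ`; otherwise `0`. -/
def xi (u : ℝ) : ℝ :=
  open Classical in
  if h : ∃ x : ℝ, 0 < x ∧ Real.exp x = 1 + u * x then h.choose else 0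

/-- `p_{n,m}`: probability that a uniformly random permutation of `{1,…,n}` is `m`-friable,
i.e. has no cycle of length greater than `m`. -/
def permProb (n m : ℕ) : ℝ :=
  (Nat.card {σ : Equiv.Perm (Fin n) // ∀ c ∈ σ.cycleType, c ≤ m} : ℝ) /
    (Nat.factorial n : ℝ)

/-- `p_{n,m,q}`: proportion of monic polynomials of degree `n` over a finite field `F`
(of cardinality `q`) that are `m`-friable, i.e. all of whose monic irreducible factors
have degree at most `m`. -/
def polyProb (F : Type) [Field F] [Fintype F] (n m : ℕ) : ℝ :=
  (Nat.card {f : Polynomial F // f.Monic ∧ f.natDegree = n ∧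
      ∀ p : Polynomial F, p.Monic → Irreducible p → p ∣ f → p.natDegree ≤ m} : ℝ) /
    (Fintype.card F : ℝ) ^ n

/-- `F_q(z) = ∏_{deg P ≤ m} (1 - (z/q)^{deg P})⁻¹`, the product over monic irreducible
polynomials `P` over `F` of degree at most `m`. -/
def FqFun (F : Type) [Field F] [Fintype F] (m : ℕ) (z : ℝ) : ℝ :=
  ∏ᶠ p ∈ {p : Polynomial F | p.Monic ∧ Irreducible p ∧ p.natDegree ≤ m},
    (1 - (z / (Fintype.card F : ℝ)) ^ p.natDegree)⁻¹

/-- `G_q(z) = F_q(z) · exp(-∑_{i=1}^m z^i/i)`. -/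
def Gq (F : Type) [Field F] [Fintype F] (m : ℕ) (z : ℝ) : ℝ :=
  FqFun F m z * Real.exp (-(∑ i ∈ Finset.Icc 1 m, z ^ i / (i : ℝ)))

/-- The coefficients `d_{m,i}`. -/
def dcoef (m i : ℕ) : ℝ :=
  if i = m then -(1 / (m : ℝ)) * ∑ j ∈ Finset.Icc 2 m, (1 : ℝ) / (j : ℝ)
  else Real.Gamma ((i : ℝ) + (i : ℝ) / (m : ℝ)) /
    (((m : ℝ) - (i : ℝ)) * (Nat.factorial i : ℝ) * Real.Gamma (1 + (i : ℝ) / (m : ℝ)))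

/-- `T(s) = ∫₀^s ((e^t - 1)/t)·((t/m)/(1 - e^{-t/m}) - 1) dt`, integrand extended by `0` at `t = 0`. -/
def Tfun (m : ℕ) (s : ℝ) : ℝ :=
  ∫ t in (0:ℝ)..s,
    if t = 0 then 0 else
      ((Real.exp t - 1) / t) * ((t / (m : ℝ)) / (1 - Real.exp (-t / (m : ℝ))) - 1)

end

/-
Expanding the Euler product gives `log G_q(z) = ∑_{N > m} Λ_m(N) (z/q)^N / N`, where `Λ_m(N)` sums
the degrees of the primes of degree at most `m` dividing `N`: for `1 ≤ N ≤ m` one has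
`Λ_m(N) = q^N`, and these terms cancel against the exponential factor. For `N > m` only primes of
degree at most `N/2` contribute, so `Λ_m(N) ≤ 2 q^⌊N/2⌋`. Hence, with `y = e^{ξ(u)/m} ≥ x` and
`y² < q`, the difference `log G_q(y) - log G_q(x)` is
`O(log(y/x) y^(m+1) / q^⌈(m+1)/2⌉)`.

To bound `log(y/x)`, put `φ(t) = (e^t - 1)/t`, so that `φ(ξ(u)) = u`, while summing the geometric
series gives `u φ(log x) = x φ(m log x)`. Since `e^{t/2} ≤ φ(t) ≤ e^t` and `e^{-t/2} φ(t)` is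
increasing for `t ≥ 0`, it follows that `m log x ≤ ξ(u) ≤ (m+1) log x`, so `log(y/x) ≤ ξ(u)/m²`.
-/

section IrreduciblePolynomials

open Polynomial UniqueFactorizationMonoid

variable (F : Type*) [Field F]

lemma finite_setOf_natDegree_le [Finite F] (m : ℕ) : {p : F[X] | p.natDegree ≤ m}.Finite := by
  have : Finite (degreeLT F (m + 1)) := Finite.of_equiv _ (degreeLTEquiv F (m + 1)).symm.toEquiv
  refine (Set.toFinite (degreeLT F (m + 1) : Set F[X])).subset fun p hp ↦ ?_
  exact mem_degreeLT.2 (degree_le_natDegree.trans_lt (by exact_mod_cast Nat.lt_succ_of_le hp))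

variable {F} in
open scoped Classical in
lemma sum_natDegree_normalizedFactors_of_squarefree {f : F[X]} (hf : Squarefree f) :
    ∑ p ∈ (normalizedFactors f).toFinset, p.natDegree = f.natDegree := by
  have hnodup := (squarefree_iff_nodup_normalizedFactors hf.ne_zero).1 hf
  have hmonic : ∀ p ∈ normalizedFactors f, p.Monic := fun p hp ↦
    ((Polynomial.mem_normalizedFactors_iff hf.ne_zero).1 hp).2.1
  conv_rhs => rw [← leadingCoeff_mul_prod_normalizedFactors f,
    natDegree_C_mul (leadingCoeff_ne_zero.2 hf.ne_zero), natDegree_multiset_prod_of_monic _ hmonic]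
  rw [Finset.sum, Multiset.toFinset_val, hnodup.dedup]

variable [Fintype F]

lemma squarefree_X_pow_card_pow_sub_X {N : ℕ} (hN : N ≠ 0) :
    Squarefree (X ^ Fintype.card F ^ N - X : F[X]) := by
  obtain ⟨p, _⟩ := CharP.exists F
  refine (galois_poly_separable p _ (dvd_pow ?_ hN)).squarefree
  exact (CharP.cast_eq_zero_iff F p _).1 (FiniteField.cast_card_eq_zero F)

/-- The primes of `F[X]` of degree at most `m`, that is, the index set of the product `F_q`. -/
noncomputable def monicIrreducibles (m : ℕ) : Finset F[X] :=
  ((finite_setOf_natDegree_le F m).subset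
    fun _ hp ↦ hp.2.2 : {p : F[X] | p.Monic ∧ Irreducible p ∧ p.natDegree ≤ m}.Finite).toFinset

variable {F} in
lemma mem_monicIrreducibles {m : ℕ} {p : F[X]} :
    p ∈ monicIrreducibles F m ↔ p.Monic ∧ Irreducible p ∧ p.natDegree ≤ m := by
  simp [monicIrreducibles]

/-- The sum of the von Mangoldt function of `F[X]`, normalized by `Λ (P ^ k) = deg P`, over the
prime powers `P ^ k` of degree `N` with `deg P ≤ m`. -/
noncomputable def vonMangoldtSum (m N : ℕ) : ℕ :=
  ∑ p ∈ monicIrreducibles F m with p.natDegree ∣ N, p.natDegree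

variable {N m : ℕ}

open scoped Classical in
lemma filter_monicIrreducibles_eq_normalizedFactors (hN : N ≠ 0) (hNm : N ≤ m) :
    {p ∈ monicIrreducibles F m | p.natDegree ∣ N} =
      (normalizedFactors (X ^ Fintype.card F ^ N - X : F[X])).toFinset := by
  ext p
  rw [Finset.mem_filter, mem_monicIrreducibles, Multiset.mem_toFinset,
    Polynomial.mem_normalizedFactors_iff (squarefree_X_pow_card_pow_sub_X F hN).ne_zero,
    ← Nat.card_eq_fintype_card]
  constructor
  · rintro ⟨⟨hmonic, hirr, -⟩, hdvd⟩
    exact ⟨hirr, hmonic, hirr.natDegree_dvd_iff_dvd_X_pow_card_pow_sub_X.1 hdvd⟩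
  · rintro ⟨hirr, hmonic, hdvd⟩
    have hdeg := hirr.natDegree_dvd_iff_dvd_X_pow_card_pow_sub_X.2 hdvd
    exact ⟨⟨hmonic, hirr, (Nat.le_of_dvd (Nat.pos_of_ne_zero hN) hdeg).trans hNm⟩, hdeg⟩

lemma vonMangoldtSum_of_le (hN : N ≠ 0) (hNm : N ≤ m) :
    vonMangoldtSum F m N = Fintype.card F ^ N := by
  classical
  rw [vonMangoldtSum, filter_monicIrreducibles_eq_normalizedFactors F hN hNm,
    sum_natDegree_normalizedFactors_of_squarefree (squarefree_X_pow_card_pow_sub_X F hN),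
    FiniteField.X_pow_card_pow_sub_X_natDegree_eq F hN Fintype.one_lt_card]

lemma sum_Icc_one_pow_le_two_mul_pow {q : ℕ} (hq : 2 ≤ q) (k : ℕ) :
    ∑ d ∈ Finset.Icc 1 k, q ^ d ≤ 2 * q ^ k := by
  induction k with
  | zero => simp
  | succ k ih =>
    calc ∑ d ∈ Finset.Icc 1 (k + 1), q ^ d
        ≤ 2 * q ^ k + q ^ (k + 1) := by rw [Finset.sum_Icc_succ_top (by lia)]; gcongr
      _ ≤ q * q ^ k + q ^ (k + 1) := by gcongr
      _ = 2 * q ^ (k + 1) := by ring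

-- A proper divisor of `N` is at most `N / 2`, and the primes of degree `d` contribute at most
-- `q ^ d`.
lemma vonMangoldtSum_le_of_lt (hmN : m < N) :
    vonMangoldtSum F m N ≤ 2 * Fintype.card F ^ (N / 2) := by
  set T := {p ∈ monicIrreducibles F m | p.natDegree ∣ N} with hT
  have hmaps : ∀ p ∈ T, p.natDegree ∈ Finset.Icc 1 (N / 2) := by
    intro p hp
    obtain ⟨hp, k, hk⟩ := Finset.mem_filter.1 hp
    obtain ⟨-, hirr, hle⟩ := mem_monicIrreducibles.1 hp
    have hk2 : 2 ≤ k := by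
      by_contra! hlt
      interval_cases k <;> lia
    have : p.natDegree * 2 ≤ N := hk ▸ Nat.mul_le_mul_left _ hk2
    exact Finset.mem_Icc.2 ⟨hirr.natDegree_pos, by lia⟩
  have hfiber : ∀ d ∈ Finset.Icc 1 (N / 2),
      ∑ p ∈ T with p.natDegree = d, p.natDegree ≤ Fintype.card F ^ d := by
    intro d hd
    rw [← vonMangoldtSum_of_le F (Nat.one_le_iff_ne_zero.1 (Finset.mem_Icc.1 hd).1) le_rfl]
    refine Finset.sum_le_sum_of_subset fun p hp ↦ ?_
    simp only [hT, Finset.mem_filter, mem_monicIrreducibles] at hp ⊢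
    exact ⟨⟨hp.1.1.1, hp.1.1.2.1, hp.2.le⟩, hp.2.dvd⟩
  calc vonMangoldtSum F m N
      = ∑ d ∈ Finset.Icc 1 (N / 2), ∑ p ∈ T with p.natDegree = d, p.natDegree :=
        (Finset.sum_fiberwise_of_maps_to hmaps _).symm
    _ ≤ ∑ d ∈ Finset.Icc 1 (N / 2), Fintype.card F ^ d := Finset.sum_le_sum hfiber
    _ ≤ 2 * Fintype.card F ^ (N / 2) := sum_Icc_one_pow_le_two_mul_pow Fintype.one_lt_card _

end IrreduciblePolynomials

section EulerProduct

lemma hasSum_dvd_mul_pow_div {t : ℝ} {d : ℕ} (hd : d ≠ 0) (ht : |t| < 1) :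
    HasSum (fun N : ℕ ↦ ((if d ∣ N then d else 0 : ℕ) : ℝ) * t ^ N / N) (-log (1 - t ^ d)) := by
  have htd : |t ^ d| < 1 := by rw [abs_pow]; exact pow_lt_one₀ (abs_nonneg t) ht hd
  have hinj : Function.Injective fun k : ℕ ↦ d * (k + 1) := fun a b hab ↦
    Nat.succ_injective (Nat.eq_of_mul_eq_mul_left (Nat.pos_of_ne_zero hd) hab)
  rw [← hinj.hasSum_iff]
  · convert! hasSum_pow_div_log_of_abs_lt_one htd using 2 with k
    simp only [Function.comp_apply, dvd_mul_right, if_true, pow_mul]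
    push_cast
    field_simp
  · intro N hN
    by_cases hdN : d ∣ N
    · obtain ⟨_ | k, rfl⟩ := hdN
      · simp
      · exact absurd ⟨k, rfl⟩ hN
    · simp [hdN]

lemma abs_div_natCast_lt_one {z : ℝ} {n : ℕ} (hz : |z| < n) : |z / n| < 1 := by
  rw [abs_div, Nat.abs_cast]
  exact (div_lt_one ((abs_nonneg z).trans_lt hz)).2 hz

variable (F : Type) [Field F] [Fintype F] (m : ℕ) {z : ℝ}

lemma two_le_cast_card : 2 ≤ (Fintype.card F : ℝ) := by
  exact_mod_cast Fintype.one_lt_card (α := F)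

variable {F m} in
lemma one_sub_div_card_pow_pos {p : Polynomial F} (hp : p ∈ monicIrreducibles F m)
    (hz : |z| < Fintype.card F) : 0 < 1 - (z / Fintype.card F) ^ p.natDegree := by
  have hdeg := (mem_monicIrreducibles.1 hp).2.1.natDegree_pos.ne'
  have hpow := pow_lt_one₀ (abs_nonneg _) (abs_div_natCast_lt_one hz) hdeg
  rw [← abs_pow] at hpow
  exact sub_pos.2 ((le_abs_self _).trans_lt hpow)

lemma FqFun_eq_prod (z : ℝ) :
    FqFun F m z = ∏ p ∈ monicIrreducibles F m, (1 - (z / Fintype.card F) ^ p.natDegree)⁻¹ :=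
  finprod_mem_eq_finite_toFinset_prod _ _

lemma FqFun_pos (hz : |z| < Fintype.card F) : 0 < FqFun F m z := by
  rw [FqFun_eq_prod]
  exact Finset.prod_pos fun p hp ↦ inv_pos.2 (one_sub_div_card_pow_pos hp hz)

lemma hasSum_log_FqFun (hz : |z| < Fintype.card F) :
    HasSum (fun N : ℕ ↦ vonMangoldtSum F m N * (z / Fintype.card F) ^ N / N)
      (log (FqFun F m z)) := by
  rw [FqFun_eq_prod, log_prod fun p hp ↦ (inv_pos.2 (one_sub_div_card_pow_pos hp hz)).ne']
  simp only [log_inv, vonMangoldtSum, Finset.sum_filter, Nat.cast_sum, Finset.sum_mul,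
    Finset.sum_div]
  exact hasSum_sum fun p hp ↦ hasSum_dvd_mul_pow_div
    (mem_monicIrreducibles.1 hp).2.1.natDegree_pos.ne' (abs_div_natCast_lt_one hz)

lemma Gq_pos (hz : |z| < Fintype.card F) : 0 < Gq F m z :=
  mul_pos (FqFun_pos F m hz) (exp_pos _)

lemma hasSum_log_Gq (hz : |z| < Fintype.card F) :
    HasSum (fun j : ℕ ↦ vonMangoldtSum F m (j + (m + 1)) *
        (z / Fintype.card F) ^ (j + (m + 1)) / ((j + (m + 1) : ℕ) : ℝ))
      (log (Gq F m z)) := by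
  have hhead : ∑ N ∈ Finset.range (m + 1),
      (vonMangoldtSum F m N * (z / Fintype.card F) ^ N / N : ℝ) =
        ∑ i ∈ Finset.Icc 1 m, z ^ i / (i : ℝ) := by
    rw [Finset.sum_range_succ', ← Finset.Ico_add_one_right_eq_Icc, Finset.sum_Ico_eq_sum_range]
    simp only [CharP.cast_eq_zero, div_zero, add_zero, add_tsub_cancel_right]
    refine Finset.sum_congr rfl fun i hi ↦ ?_
    rw [add_comm 1 i, vonMangoldtSum_of_le F i.succ_ne_zero (by grind), div_pow, Nat.cast_pow,
      mul_div_cancel₀ _ (pow_ne_zero _ (by positivity))]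
  rw [Gq, log_mul (FqFun_pos F m hz).ne' (exp_pos _).ne', log_exp, ← sub_eq_add_neg, ← hhead]
  exact (hasSum_nat_add_iff' (m + 1)).2 (hasSum_log_FqFun F m hz)

end EulerProduct

section Comparison

lemma pow_sub_pow_le_mul_log {x y : ℝ} (hx : 0 < x) (hy : 0 < y) (n : ℕ) :
    y ^ n - x ^ n ≤ n * log (y / x) * y ^ n := by
  have h := one_sub_inv_le_log_of_pos (pow_pos (div_pos hy hx) n)
  rw [log_pow, ← inv_pow, inv_div, div_pow] at h
  calc y ^ n - x ^ n = (1 - x ^ n / y ^ n) * y ^ n := by field_simp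
    _ ≤ n * log (y / x) * y ^ n := by gcongr

lemma hasSum_pow_div_pow_half {y r : ℝ} (hy : y ^ 2 < r) :
    HasSum (fun j : ℕ ↦ y ^ j / r ^ (j / 2)) ((1 + y) / (1 - y ^ 2 / r)) := by
  have hr : 0 < r := (sq_nonneg y).trans_lt hy
  have hgeom := hasSum_geometric_of_lt_one (by positivity) ((div_lt_one hr).2 hy)
  rw [add_div, one_div, div_eq_mul_inv y]
  refine HasSum.even_add_odd ?_ ?_
  · simpa only [Nat.mul_div_cancel_left _ two_pos, div_pow, pow_mul] using hgeom
  · convert! hgeom.mul_left y using 2 with k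
    rw [show (2 * k + 1) / 2 = k by lia, div_pow, pow_succ, pow_mul]
    ring

variable (F : Type) [Field F] [Fintype F] (m : ℕ) {x y : ℝ}

lemma vonMangoldtSum_div_card_pow_le (j : ℕ) :
    (vonMangoldtSum F m (j + (m + 1)) : ℝ) / (Fintype.card F : ℝ) ^ (j + (m + 1)) ≤
      2 / ((Fintype.card F : ℝ) ^ ((m + 2) / 2) * (Fintype.card F : ℝ) ^ (j / 2)) := by
  have hq := two_le_cast_card F
  have hweight : (vonMangoldtSum F m (j + (m + 1)) : ℝ) ≤
      2 * (Fintype.card F : ℝ) ^ ((j + (m + 1)) / 2) := by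
    exact_mod_cast vonMangoldtSum_le_of_lt F (by lia)
  rw [div_le_div_iff₀ (by positivity) (by positivity), ← pow_add]
  calc _ ≤ 2 * (Fintype.card F : ℝ) ^ ((j + (m + 1)) / 2) *
        (Fintype.card F : ℝ) ^ ((m + 2) / 2 + j / 2) := by gcongr
    _ = 2 * (Fintype.card F : ℝ) ^ ((j + (m + 1)) / 2 + ((m + 2) / 2 + j / 2)) := by ring
    _ ≤ 2 * (Fintype.card F : ℝ) ^ (j + (m + 1)) :=
      mul_le_mul_of_nonneg_left (pow_le_pow_right₀ (by linarith) (by lia)) two_pos.le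

lemma abs_lt_card_of_sq_lt_card (hy : y ^ 2 < Fintype.card F) : |y| < Fintype.card F :=
  abs_lt_of_sq_lt_sq (by nlinarith [two_le_cast_card F]) (by linarith [two_le_cast_card F])

variable (hx : 0 < x) (hxy : x ≤ y) (hy : y ^ 2 < Fintype.card F)
include hx hxy hy

lemma hasSum_log_Gq_sub_log_Gq :
    HasSum (fun j : ℕ ↦ vonMangoldtSum F m (j + (m + 1)) /
        (Fintype.card F : ℝ) ^ (j + (m + 1)) *
        ((y ^ (j + (m + 1)) - x ^ (j + (m + 1))) / ((j + (m + 1) : ℕ) : ℝ)))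
      (log (Gq F m y) - log (Gq F m x)) := by
  have hxq : x ^ 2 < Fintype.card F := (pow_le_pow_left₀ hx.le hxy 2).trans_lt hy
  convert! (hasSum_log_Gq F m (abs_lt_card_of_sq_lt_card F hy)).sub
    (hasSum_log_Gq F m (abs_lt_card_of_sq_lt_card F hxq)) using 2 with j
  simp only [div_pow]
  ring

lemma log_Gq_le_log_Gq : log (Gq F m x) ≤ log (Gq F m y) := by
  refine sub_nonneg.1 ((hasSum_log_Gq_sub_log_Gq F m hx hxy hy).nonneg fun j ↦ ?_)
  have := sub_nonneg.2 (pow_le_pow_left₀ hx.le hxy (j + (m + 1)))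
  positivity

lemma log_Gq_sub_log_Gq_le :
    log (Gq F m y) - log (Gq F m x) ≤ 2 * log (y / x) * y ^ (m + 1) /
      (Fintype.card F : ℝ) ^ ((m + 2) / 2) * ((1 + y) / (1 - y ^ 2 / Fintype.card F)) := by
  have hy0 : 0 < y := hx.trans_le hxy
  have : 0 < (Fintype.card F : ℝ) := by linarith [two_le_cast_card F]
  refine hasSum_le (fun j ↦ ?_) (hasSum_log_Gq_sub_log_Gq F m hx hxy hy)
    ((hasSum_pow_div_pow_half hy).mul_left _)
  have hpow : (y ^ (j + (m + 1)) - x ^ (j + (m + 1))) / ((j + (m + 1) : ℕ) : ℝ) ≤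
      log (y / x) * y ^ (j + (m + 1)) := by
    rw [div_le_iff₀' (by positivity), ← mul_assoc]
    exact pow_sub_pow_le_mul_log hx hy0 _
  have hsub := sub_nonneg.2 (pow_le_pow_left₀ hx.le hxy (j + (m + 1)))
  calc _ ≤ 2 / ((Fintype.card F : ℝ) ^ ((m + 2) / 2) * (Fintype.card F : ℝ) ^ (j / 2)) *
        (log (y / x) * y ^ (j + (m + 1))) :=
        mul_le_mul (vonMangoldtSum_div_card_pow_le F m j) hpow
          (div_nonneg hsub (Nat.cast_nonneg _)) (by positivity)
    _ = 2 * log (y / x) * y ^ (m + 1) / (Fintype.card F : ℝ) ^ ((m + 2) / 2) *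
        (y ^ j / (Fintype.card F : ℝ) ^ (j / 2)) := by
      rw [pow_add]
      field_simp

lemma abs_Gq_div_Gq_sub_one_le :
    |Gq F m x / Gq F m y - 1| ≤ 2 * log (y / x) * y ^ (m + 1) /
      (Fintype.card F : ℝ) ^ ((m + 2) / 2) * ((1 + y) / (1 - y ^ 2 / Fintype.card F)) := by
  have hxq : x ^ 2 < Fintype.card F := (pow_le_pow_left₀ hx.le hxy 2).trans_lt hy
  have hGx := Gq_pos F m (abs_lt_card_of_sq_lt_card F hxq)
  have hGy := Gq_pos F m (abs_lt_card_of_sq_lt_card F hy)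
  have hle : Gq F m x / Gq F m y ≤ 1 := by
    rw [div_le_one hGy]
    exact (log_le_log_iff hGx hGy).1 (log_Gq_le_log_Gq F m hx hxy hy)
  have hlog := one_sub_inv_le_log_of_pos (div_pos hGy hGx)
  rw [inv_div, log_div hGy.ne' hGx.ne'] at hlog
  rw [abs_of_nonpos (sub_nonpos.2 hle), neg_sub]
  exact hlog.trans (log_Gq_sub_log_Gq_le F m hx hxy hy)

end Comparison

section ExpSlope

/-- `(e ^ t - 1) / t`, extended by `1` at `t = 0`; for `u ≥ 1`, `ξ(u)` is its inverse at `u`. -/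
noncomputable def expSlope (t : ℝ) : ℝ := dslope exp 0 t

@[simp] lemma expSlope_zero : expSlope 0 = 1 := by simp [expSlope]

lemma mul_expSlope (t : ℝ) : t * expSlope t = exp t - 1 := by
  simpa [expSlope] using sub_smul_dslope exp 0 t

lemma sinh_convexOn_Ici : ConvexOn ℝ (Set.Ici 0) sinh := by
  refine MonotoneOn.convexOn_of_deriv (convex_Ici 0) continuous_sinh.continuousOn
    differentiable_sinh.differentiableOn ?_
  rw [Real.deriv_sinh]
  exact cosh_strictMonoOn.monotoneOn.mono interior_subset

lemma monotoneOn_dslope_sinh : MonotoneOn (dslope sinh 0) (Set.Ici 0) := by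
  intro a ha b hb hab
  rcases (Set.mem_Ici.1 ha).eq_or_lt with rfl | ha
  · rcases (Set.mem_Ici.1 hb).eq_or_lt with rfl | hb
    · rfl
    · rw [dslope_same, dslope_of_ne _ hb.ne', slope_def_field, le_div_iff₀ (by simpa using hb)]
      simpa using self_le_sinh_iff.2 hb.le
  · have hb : 0 < b := lt_of_lt_of_le ha hab
    rw [dslope_of_ne _ ha.ne', dslope_of_ne _ hb.ne', slope_def_field, slope_def_field]
    exact sinh_convexOn_Ici.secant_mono Set.self_mem_Ici ha.le hb.le ha.ne' hb.ne' hab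

lemma expSlope_eq_exp_half_mul (t : ℝ) :
    expSlope t = exp (t / 2) * dslope sinh 0 (t / 2) := by
  rcases eq_or_ne t 0 with rfl | ht
  · simp
  · have hexp : exp t - 1 = 2 * exp (t / 2) * sinh (t / 2) := by
      rw [sinh_eq, exp_neg]
      field_simp
      rw [← exp_nat_mul]
      ring_nf
    rw [dslope_of_ne _ (by positivity), slope_def_field, ← mul_right_inj' ht, mul_expSlope, hexp]
    simp only [sinh_zero, sub_zero]
    field_simp

variable {a b t : ℝ}

lemma exp_half_sub_mul_expSlope_le (ha : 0 ≤ a) (hab : a ≤ b) :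
    exp ((b - a) / 2) * expSlope a ≤ expSlope b := by
  have hexp : exp ((b - a) / 2) * exp (a / 2) = exp (b / 2) := by rw [← exp_add]; ring_nf
  rw [expSlope_eq_exp_half_mul, expSlope_eq_exp_half_mul, ← mul_assoc, hexp]
  gcongr
  exact monotoneOn_dslope_sinh (Set.mem_Ici.2 (by linarith)) (Set.mem_Ici.2 (by linarith))
    (by linarith)

lemma exp_half_le_expSlope (ht : 0 ≤ t) : exp (t / 2) ≤ expSlope t := by
  simpa using exp_half_sub_mul_expSlope_le le_rfl ht

lemma expSlope_le_exp (ht : 0 ≤ t) : expSlope t ≤ exp t := by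
  rcases ht.eq_or_lt with rfl | ht
  · simp
  · have hneg : exp (-t) * exp t = 1 := by rw [← exp_add]; simp
    refine le_of_mul_le_mul_left ?_ ht
    rw [mul_expSlope]
    nlinarith [exp_pos t, add_one_le_exp (-t)]

lemma strictMonoOn_expSlope : StrictMonoOn expSlope (Set.Ici 0) := by
  intro a ha b _ hab
  have hpos : 0 < expSlope a := (exp_pos _).trans_le (exp_half_le_expSlope ha)
  calc expSlope a < exp ((b - a) / 2) * expSlope a :=
        lt_mul_of_one_lt_left hpos (one_lt_exp_iff.2 (by linarith))
    _ ≤ expSlope b := exp_half_sub_mul_expSlope_le ha hab.le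

end ExpSlope

section Xi

variable {u : ℝ}

lemma exists_pos_exp_eq_one_add_mul (hu : 1 < u) : ∃ x : ℝ, 0 < x ∧ exp x = 1 + u * x := by
  have hu0 : 0 < u := by linarith
  have hle : exp (log u) - u * log u ≤ 1 := by
    have := mul_le_mul_of_nonneg_left (one_sub_inv_le_log_of_pos hu0) hu0.le
    rw [mul_sub, mul_inv_cancel₀ hu0.ne'] at this
    rw [exp_log hu0]
    linarith
  have hge : 1 ≤ exp (2 * u) - u * (2 * u) := by
    nlinarith [quadratic_le_exp_of_nonneg (by linarith : 0 ≤ 2 * u)]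
  obtain ⟨x, hx, hx1⟩ := intermediate_value_Icc
    (by linarith [log_le_sub_one_of_pos hu0] : log u ≤ 2 * u)
    (by fun_prop : ContinuousOn (fun x ↦ exp x - u * x) _) ⟨hle, hge⟩
  exact ⟨x, (log_pos hu).trans_le hx.1, by linarith⟩

lemma xi_spec (hu : 1 < u) : 0 < xi u ∧ exp (xi u) = 1 + u * xi u := by
  have h := exists_pos_exp_eq_one_add_mul hu
  rw [xi, dif_pos h]
  exact h.choose_spec

lemma xi_one : xi 1 = 0 := by
  refine dif_neg ?_
  rintro ⟨x, hx, h⟩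
  linarith [add_one_lt_exp hx.ne']

lemma xi_nonneg (hu : 1 ≤ u) : 0 ≤ xi u := by
  rcases hu.eq_or_lt with rfl | hu
  · exact xi_one.ge
  · exact (xi_spec hu).1.le

lemma exp_xi (hu : 1 ≤ u) : exp (xi u) = 1 + u * xi u := by
  rcases hu.eq_or_lt with rfl | hu
  · simp [xi_one]
  · exact (xi_spec hu).2

lemma expSlope_xi (hu : 1 ≤ u) : expSlope (xi u) = u := by
  rcases hu.eq_or_lt with rfl | hu'
  · simp [xi_one]
  · rw [← mul_right_inj' (xi_spec hu').1.ne', mul_expSlope, exp_xi hu]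
    ring

lemma xi_le_two_mul_log (hu : 1 ≤ u) : xi u ≤ 2 * log u := by
  have h : exp (xi u / 2) ≤ u := (exp_half_le_expSlope (xi_nonneg hu)).trans_eq (expSlope_xi hu)
  linarith [(le_log_iff_exp_le (by linarith)).2 h]

end Xi

section SaddlePoint

variable {m : ℕ} {u x : ℝ}

lemma one_le_of_le_sum_pow (hm : m ≠ 0) (hx : 0 < x)
    (hsum : (m : ℝ) ≤ ∑ i ∈ Finset.Icc 1 m, x ^ i) : 1 ≤ x := by
  by_contra! hlt
  have : ∑ i ∈ Finset.Icc 1 m, x ^ i < ∑ _i ∈ Finset.Icc 1 m, (1 : ℝ) :=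
    Finset.sum_lt_sum_of_nonempty (Finset.nonempty_Icc.2 (Nat.one_le_iff_ne_zero.2 hm))
      fun i hi ↦ pow_lt_one₀ hx.le hlt (Nat.one_le_iff_ne_zero.1 (Finset.mem_Icc.1 hi).1)
  simp only [Finset.sum_const, Nat.card_Icc, add_tsub_cancel_right, nsmul_eq_mul, mul_one] at this
  linarith

lemma mul_expSlope_log (hm : m ≠ 0) (hx : 0 < x)
    (hsum : ∑ i ∈ Finset.Icc 1 m, x ^ i = m * u) :
    u * expSlope (log x) = x * expSlope (m * log x) := by
  rcases eq_or_ne x 1 with rfl | hx1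
  · simpa [hm, eq_comm] using hsum
  · have hmlog : (m : ℝ) * log x ≠ 0 :=
      mul_ne_zero (Nat.cast_ne_zero.2 hm) (log_ne_zero_of_pos_of_ne_one hx hx1)
    have hgeom : m * u * (x - 1) = x * (x ^ m - 1) := by
      rw [← hsum, ← Finset.Ico_add_one_right_eq_Icc, geom_sum_Ico_mul _ (by lia)]
      ring
    have hlog := mul_expSlope (log x)
    have hmul := mul_expSlope (m * log x)
    rw [exp_nat_mul, exp_log hx] at hmul
    rw [exp_log hx] at hlog
    rw [← mul_right_inj' hmlog]
    calc m * log x * (u * expSlope (log x)) = m * u * (log x * expSlope (log x)) := by ring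
      _ = x * (m * log x * expSlope (m * log x)) := by rw [hlog, hmul, hgeom]
      _ = m * log x * (x * expSlope (m * log x)) := by ring

variable (hm : m ≠ 0) (hu : 1 ≤ u) (hx : 0 < x) (hsum : ∑ i ∈ Finset.Icc 1 m, x ^ i = m * u)
include hm hu hx hsum

lemma log_nonneg_of_sum_pow_eq : 0 ≤ log x := by
  refine log_nonneg (one_le_of_le_sum_pow hm hx ?_)
  rw [hsum]
  exact le_mul_of_one_le_right (Nat.cast_nonneg m) hu

lemma mul_log_le_xi : m * log x ≤ xi u := by
  have hlog := log_nonneg_of_sum_pow_eq hm hu hx hsum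
  refine (strictMonoOn_expSlope.le_iff_le (Set.mem_Ici.2 (by positivity)) (xi_nonneg hu)).1 ?_
  rw [expSlope_xi hu]
  refine le_of_mul_le_mul_left ?_ hx
  calc x * expSlope (m * log x) = u * expSlope (log x) := (mul_expSlope_log hm hx hsum).symm
    _ ≤ u * x := by
      gcongr
      exact (expSlope_le_exp hlog).trans_eq (exp_log hx)
    _ = x * u := mul_comm u x

lemma xi_le_add_one_mul_log : xi u ≤ (m + 1) * log x := by
  have hlog := log_nonneg_of_sum_pow_eq hm hu hx hsum
  have hpos : 0 < expSlope (m * log x) :=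
    (exp_pos _).trans_le (exp_half_le_expSlope (by positivity))
  have hx_eq : exp (log x / 2) * exp (log x / 2) = x := by
    rw [← exp_add, add_halves, exp_log hx]
  have hu_le : u ≤ exp (log x / 2) * expSlope (m * log x) := by
    refine le_of_mul_le_mul_left ?_ (exp_pos (log x / 2))
    calc exp (log x / 2) * u ≤ expSlope (log x) * u := by
          gcongr
          exact exp_half_le_expSlope hlog
      _ = x * expSlope (m * log x) := by rw [mul_comm, mul_expSlope_log hm hx hsum]
      _ = exp (log x / 2) * (exp (log x / 2) * expSlope (m * log x)) := by
          rw [← mul_assoc, hx_eq]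
  have hle : exp ((xi u - m * log x) / 2) ≤ exp (log x / 2) := by
    refine le_of_mul_le_mul_right ?_ hpos
    calc _ ≤ expSlope (xi u) :=
          exp_half_sub_mul_expSlope_le (by positivity) (mul_log_le_xi hm hu hx hsum)
      _ ≤ _ := (expSlope_xi hu).trans_le hu_le
  linarith [exp_le_exp.1 hle]

end SaddlePoint

section FinalEstimate

variable {m : ℕ} {u x : ℝ}

lemma exp_one_fifth_lt : exp (1 / 5) < (2 : ℝ) ^ ((1 : ℝ) / 3) := by
  rw [rpow_def_of_pos two_pos, exp_lt_exp]
  linarith [log_two_gt_d9]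

lemma exp_xi_div_lt (hm : m ≠ 0) (hu : 1 ≤ u) (hum : 10 * log u ≤ m) :
    exp (xi u / m) < (2 : ℝ) ^ ((1 : ℝ) / 3) := by
  refine (exp_le_exp.2 ?_).trans_lt exp_one_fifth_lt
  rw [div_le_iff₀ (by positivity)]
  linarith [xi_le_two_mul_log hu]

lemma two_rpow_one_third_lt : (2 : ℝ) ^ ((1 : ℝ) / 3) < 4 / 3 := by
  rw [one_div, rpow_inv_lt_iff_of_pos two_pos.le (by norm_num) (by norm_num)]
  norm_num

lemma xi_mul_one_add_mul_xi_le (hu : 1 ≤ u) :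
    xi u * (1 + u * xi u) ≤ 8 * u * log (u + 1) ^ 2 := by
  have hxi : xi u ≤ 2 * log (u + 1) :=
    (xi_le_two_mul_log hu).trans (by gcongr; linarith)
  have hlog : 1 / 2 ≤ log (u + 1) := by
    linarith [log_two_gt_d9, log_le_log two_pos (by linarith : 2 ≤ u + 1)]
  have hxi0 := xi_nonneg hu
  have hone : 1 ≤ u * (2 * log (u + 1)) := by nlinarith
  calc xi u * (1 + u * xi u)
      ≤ 2 * log (u + 1) * (u * (2 * log (u + 1)) + u * (2 * log (u + 1))) := by gcongr
    _ = 8 * u * log (u + 1) ^ 2 := by ring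

lemma exp_xi_div_pow_succ (hm : m ≠ 0) (hu : 1 ≤ u) :
    exp (xi u / m) ^ (m + 1) = (1 + u * xi u) * exp (xi u / m) := by
  rw [pow_succ, ← exp_nat_mul, mul_div_cancel₀ _ (Nat.cast_ne_zero.2 hm), exp_xi hu]

lemma one_add_div_one_sub_sq_div_le {y r : ℝ} (hy0 : 0 ≤ y) (hy : y ≤ 4 / 3) (hr : 2 ≤ r) :
    (1 + y) / (1 - y ^ 2 / r) ≤ 21 := by
  have hsq : y ^ 2 / r ≤ 8 / 9 := by
    rw [div_le_iff₀ (by linarith)]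
    nlinarith
  rw [div_le_iff₀ (by linarith)]
  linarith

variable (hm : m ≠ 0) (hu : 1 ≤ u) (hx : 0 < x) (hsum : ∑ i ∈ Finset.Icc 1 m, x ^ i = m * u)
include hm hu hx hsum

lemma le_exp_xi_div : x ≤ exp (xi u / m) := by
  rw [← log_le_iff_le_exp hx, le_div_iff₀' (by positivity)]
  exact mul_log_le_xi hm hu hx hsum

lemma log_exp_xi_div_div_le : log (exp (xi u / m) / x) ≤ xi u / m ^ 2 := by
  have hle := xi_le_add_one_mul_log hm hu hx hsum
  have hge := mul_log_le_xi hm hu hx hsum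
  have hm0 : (0 : ℝ) < m := by positivity
  calc log (exp (xi u / m) / x) = (xi u - m * log x) / m := by
        rw [log_div (exp_pos _).ne' hx.ne', log_exp]
        field_simp
    _ ≤ xi u / m / m := by
        gcongr
        rw [le_div_iff₀' hm0]
        nlinarith
    _ = xi u / m ^ 2 := by rw [div_div, sq]

lemma abs_Gq_div_Gq_exp_xi_sub_one_le (F : Type) [Field F] [Fintype F]
    (hy : exp (xi u / m) < (2 : ℝ) ^ ((1 : ℝ) / 3)) :
    |Gq F m x / Gq F m (exp (xi u / m)) - 1| ≤
      448 * u * log (u + 1) ^ 2 / ((m : ℝ) ^ 2 * (Fintype.card F : ℝ) ^ ((m + 2) / 2)) := by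
  have hq := two_le_cast_card F
  have hxi := xi_nonneg hu
  have hy43 := (hy.trans two_rpow_one_third_lt).le
  have hysq : exp (xi u / m) ^ 2 < Fintype.card F := by nlinarith [exp_pos (xi u / m)]
  have : 0 ≤ log (exp (xi u / m) / x) :=
    log_nonneg ((one_le_div hx).2 (le_exp_xi_div hm hu hx hsum))
  calc |Gq F m x / Gq F m (exp (xi u / m)) - 1|
      ≤ 2 * log (exp (xi u / m) / x) * exp (xi u / m) ^ (m + 1) /
          (Fintype.card F : ℝ) ^ ((m + 2) / 2) *
          ((1 + exp (xi u / m)) / (1 - exp (xi u / m) ^ 2 / Fintype.card F)) :=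
        abs_Gq_div_Gq_sub_one_le F m hx (le_exp_xi_div hm hu hx hsum) hysq
    _ ≤ 2 * (xi u / m ^ 2) * ((1 + u * xi u) * (4 / 3)) /
          (Fintype.card F : ℝ) ^ ((m + 2) / 2) * 21 := by
        rw [exp_xi_div_pow_succ hm hu]
        gcongr
        · have : exp (xi u / m) ^ 2 / Fintype.card F < 1 := (div_lt_one (by linarith)).2 hysq
          exact div_nonneg (by positivity) (by linarith)
        · exact log_exp_xi_div_div_le hm hu hx hsum
        · exact one_add_div_one_sub_sq_div_le (exp_pos _).le hy43 hq
    _ = 56 * (xi u * (1 + u * xi u)) / (m ^ 2 * (Fintype.card F : ℝ) ^ ((m + 2) / 2)) := by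
        field_simp
        ring
    _ ≤ 56 * (8 * u * log (u + 1) ^ 2) / (m ^ 2 * (Fintype.card F : ℝ) ^ ((m + 2) / 2)) := by
        gcongr 56 * ?_ / _
        exact xi_mul_one_add_mul_xi_le hu
    _ = _ := by ring

end FinalEstimate

lemma ten_mul_log_div_le_of_sqrt_le {n m : ℝ} (hm : 1 ≤ m) (hmn : m ≤ n)
    (h : √(10 * n * log n) ≤ m) : 10 * log (n / m) ≤ m := by
  have hlog : log (n / m) ≤ log n :=
    log_le_log (div_pos (by linarith) (by linarith)) (div_le_self (by linarith) hm)
  have hsq : 10 * n * log n ≤ m ^ 2 := (sqrt_le_left (by linarith)).1 h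
  have hlogn : 0 ≤ log n := log_nonneg (hm.trans hmn)
  have : m * (10 * log n) ≤ m * m := by nlinarith
  linarith [le_of_mul_le_mul_left this (by linarith)]

theorem stmt18_general {n : ℝ} {m : ℕ} (hm : 1 ≤ m) (hmn : m ≤ n) (h : 10 * log (n / m) ≤ m) :
    exp (xi (n / m) / m) < (2 : ℝ) ^ ((1 : ℝ) / 3) ∧
    ∀ (F : Type) [Field F] [Fintype F],
    ∀ x : ℝ, 0 < x → ∑ i ∈ Finset.Icc 1 m, x ^ i = n →
    |Gq F m x / Gq F m (exp (xi (n / m) / m)) - 1| ≤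
      448 * (n / m) * log (n / m + 1) ^ 2 /
        ((m : ℝ) ^ 2 * (Fintype.card F : ℝ) ^ ((m + 2) / 2)) := by
  have hm0 : m ≠ 0 := Nat.one_le_iff_ne_zero.1 hm
  have hu : 1 ≤ n / m := (one_le_div₀ (by positivity)).2 hmn
  have hlt := exp_xi_div_lt hm0 hu h
  refine ⟨hlt, fun F _ _ x hx hsum ↦ abs_Gq_div_Gq_exp_xi_sub_one_le hm0 hu hx ?_ F hlt⟩
  rw [hsum, mul_div_cancel₀ _ (Nat.cast_ne_zero.2 hm0)]

/-- Suppose `n ≥ m ≥ 1` and `m ≥ √(10·n·log n)`, and write `u = n/m`. Then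
`e^{ξ(u)/m} < 2^{1/3}`, and there is an absolute constant `C > 0` such that for every
prime power `q` (the cardinality of a finite field `F`) one has
`|G_q(x)/G_q(e^{ξ(u)/m}) − 1| ≤ C·u·(log(u+1))²/(m²·q^{⌈(m+1)/2⌉})`. -/
theorem stmt18 :
    ∃ C : ℝ, 0 < C ∧ ∀ n m : ℕ, 1 ≤ m → m ≤ n →
      Real.sqrt (10 * (n : ℝ) * Real.log n) ≤ (m : ℝ) →
      ∀ u : ℝ, u = (n : ℝ) / (m : ℝ) →
      Real.exp (xi u / (m : ℝ)) < (2 : ℝ) ^ ((1 : ℝ) / 3) ∧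
      ∀ (F : Type) [Field F] [Fintype F],
      ∀ x : ℝ, 0 < x → (∑ i ∈ Finset.Icc 1 m, x ^ i) = (n : ℝ) →
      |Gq F m x / Gq F m (Real.exp (xi u / (m : ℝ))) - 1| ≤
        C * u * (Real.log (u + 1)) ^ 2 /
          ((m : ℝ) ^ 2 * (Fintype.card F : ℝ) ^ ((m + 2) / 2)) := by
  refine ⟨448, by norm_num, fun n m hm hmn hsqrt u hu ↦ ?_⟩
  rw [hu]
  exact stmt18_general hm (mod_cast hmn)
    (ten_mul_log_div_le_of_sqrt_le (mod_cast hm) (mod_cast hmn) hsqrt)
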